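/- arXiv:1801.05214 — 4 statements merged into one kernel-verified Lean document; each statement's English description precedes it below -/
import Mathlib

section
/- Let L_j : ℝ^n → ℝ^{n_j} (1 ≤ j ≤ m) be surjective linear maps and p_j ∈ (0,1]. If the scaling condition n = ∑_{j=1}^m p_j n_j fails, then the Brascamp–Lieb constant BL(L,p) is infinite. -/
/-!
Test the inequality on indicators of balls. Let `a = 1 + ∑ j, ‖L j‖`, so that every `L j` maps the
ball of radius `R` about `0` into the ball of radius `R * a`. With `f j` the indicator of the latter,
the left side is at least `R ^ n * |B(0,1)|`, while the right side equals
`C * R ^ (∑ j, p j * nn j) * ∏ j, |B(0,a)| ^ p j`. If `C` were finite, `R ^ (n - ∑ j, p j * nn j)`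
would be bounded over all `R > 0` (`bl_ball_test`), which forces the exponent to vanish.
-/

open MeasureTheory ENNReal Real Metric Matrix

noncomputable section

abbrev Euc (n : ℕ) := EuclideanSpace ℝ (Fin n)

noncomputable def BLnum {m n : ℕ} (nn : Fin m → ℕ)
    (L : ∀ j, Euc n →L[ℝ] Euc (nn j)) (p : Fin m → ℝ)
    (f : ∀ j, Euc (nn j) → ℝ) : ℝ≥0∞ :=
  ∫⁻ x, ∏ j, (ENNReal.ofReal (f j (L j x))) ^ (p j)

noncomputable def BLden {m : ℕ} (nn : Fin m → ℕ) (p : Fin m → ℝ)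
    (f : ∀ j, Euc (nn j) → ℝ) : ℝ≥0∞ :=
  ∏ j, (ENNReal.ofReal (∫ y, f j y)) ^ (p j)

noncomputable def BLfun {m n : ℕ} (nn : Fin m → ℕ)
    (L : ∀ j, Euc n →L[ℝ] Euc (nn j)) (p : Fin m → ℝ)
    (f : ∀ j, Euc (nn j) → ℝ) : ℝ≥0∞ := BLnum nn L p f / BLden nn p f

def BLinput {m : ℕ} (nn : Fin m → ℕ) (f : ∀ j, Euc (nn j) → ℝ) : Prop :=
  (∀ j, ∀ x, 0 ≤ f j x) ∧ (∀ j, Integrable (f j)) ∧ (∀ j, 0 < ∫ y, f j y)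

noncomputable def BLconst {m n : ℕ} (nn : Fin m → ℕ)
    (L : ∀ j, Euc n →L[ℝ] Euc (nn j)) (p : Fin m → ℝ) : ℝ≥0∞ :=
  sInf {C : ℝ≥0∞ | ∀ f : ∀ j, Euc (nn j) → ℝ,
    (∀ j, ∀ x, 0 ≤ f j x) → (∀ j, Integrable (f j)) →
    BLnum nn L p f ≤ C * BLden nn p f}

noncomputable def BLsup {m n : ℕ} (nn : Fin m → ℕ)
    (L : ∀ j, Euc n →L[ℝ] Euc (nn j)) (p : Fin m → ℝ) : ℝ≥0∞ :=
  ⨆ f ∈ {f | BLinput nn f}, BLfun nn L p f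

def BLsimple {m n : ℕ} (nn : Fin m → ℕ)
    (L : ∀ j, Euc n →L[ℝ] Euc (nn j)) (p : Fin m → ℝ) : Prop :=
  (∀ j, p j ∈ Set.Icc (0:ℝ) 1) ∧
  ∃ hp : ∑ j, p j * (nn j : ℝ) = (n : ℝ),
    (⟨p, hp⟩ : {q : Fin m → ℝ // ∑ j, q j * (nn j : ℝ) = (n : ℝ)}) ∈
      interior {q : {q : Fin m → ℝ // ∑ j, q j * (nn j : ℝ) = (n : ℝ)} |
        (∀ j, q.1 j ∈ Set.Icc (0:ℝ) 1) ∧ BLconst nn L q.1 < ⊤}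

def KConstOn {k : ℕ} (κ μ : ℝ) (Ω : Set (Euc k)) (f : Euc k → ℝ) : Prop :=
  ∀ x ∈ Ω, ∀ y : Euc k, dist x y ≤ μ → f x ≤ κ * f y

def MemL1On {k : ℕ} (Ω : Set (Euc k)) (μ κ : ℝ) (f : Euc k → ℝ) : Prop :=
  (∀ x, 0 ≤ f x) ∧ Integrable f ∧ KConstOn κ μ Ω f

noncomputable def Udelta {n : ℕ} (δ : ℝ) (y : Euc n) : Set (Euc n) :=
  Metric.closedBall y (δ * Real.log (1/δ))

noncomputable def nlBLconst {m n : ℕ} (nn : Fin m → ℕ)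
    (B : ∀ j, Euc n → Euc (nn j)) (p : Fin m → ℝ)
    (u : Euc n) (δ μ κ : ℝ) : ℝ≥0∞ :=
  sInf {C : ℝ≥0∞ | ∀ f : ∀ j, Euc (nn j) → ℝ,
    (∀ j, MemL1On (B j '' Metric.closedBall u (2 * (δ * Real.log (1/δ)))) μ κ (f j)) →
    ∫⁻ y in Udelta δ u, ∏ j, (ENNReal.ofReal (f j (B j y))) ^ (p j) ≤
      C * ∏ j, (ENNReal.ofReal (∫ z, f j z)) ^ (p j)}

noncomputable def gauss {k : ℕ} (A : Matrix (Fin k) (Fin k) ℝ) (x : Euc k) : ℝ :=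
  Real.sqrt A.det * Real.exp (-Real.pi * (A.mulVec x ⬝ᵥ x))

noncomputable def gaussScaled {k : ℕ} (A : Matrix (Fin k) (Fin k) ℝ) (ρ : ℝ) (x : Euc k) : ℝ :=
  ρ ^ (-(k : ℝ)) * gauss A (ρ⁻¹ • x)

end

/-- The Brascamp–Lieb inequality with constant `C`, tested on indicators of balls of radius
`R * a`, where `a` bounds all the operator norms. -/
theorem bl_ball_test {m n : ℕ} (nn : Fin m → ℕ)
    (L : ∀ j, Euc n →L[ℝ] Euc (nn j)) (p : Fin m → ℝ) (hp : ∀ j, 0 < p j) (C : ℝ≥0∞)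
    (hC : ∀ f : ∀ j, Euc (nn j) → ℝ, (∀ j, ∀ x, 0 ≤ f j x) → (∀ j, Integrable (f j)) →
      BLnum nn L p f ≤ C * BLden nn p f)
    (a : ℝ) (ha : 0 < a) (hL : ∀ j, ‖L j‖ ≤ a) (R : ℝ) (hR : 0 < R) :
    ENNReal.ofReal (R ^ (n : ℝ)) * volume (ball (0 : Euc n) 1) ≤
      C * (ENNReal.ofReal (R ^ (∑ j, p j * (nn j : ℝ))) *
        ∏ j, volume (ball (0 : Euc (nn j)) a) ^ p j) := by
  have key := hC (fun j => (ball (0 : Euc (nn j)) (R * a)).indicator 1)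
    (fun j x => Set.indicator_nonneg (fun _ _ => zero_le_one) x)
    (fun j => (integrable_indicator_iff measurableSet_ball).2
      (integrableOn_const (C := (1 : ℝ)) measure_ball_lt_top.ne))
  have hnum : ENNReal.ofReal (R ^ (n : ℝ)) * volume (ball (0 : Euc n) 1) ≤
      BLnum nn L p (fun j => (ball (0 : Euc (nn j)) (R * a)).indicator 1) := by
    have h1 : ENNReal.ofReal (R ^ (n : ℝ)) * volume (ball (0 : Euc n) 1)
        = volume (ball (0 : Euc n) R) := by
      have := Measure.addHaar_ball_mul_of_pos (volume : Measure (Euc n)) 0 hR 1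
      rw [mul_one] at this
      rw [this, finrank_euclideanSpace_fin, Real.rpow_natCast]
    rw [h1, ← lintegral_indicator_one measurableSet_ball]
    refine lintegral_mono fun x => ?_
    by_cases hx : x ∈ ball (0 : Euc n) R
    · have hmem : ∀ j, L j x ∈ ball (0 : Euc (nn j)) (R * a) := fun j => by
        rw [mem_ball_zero_iff] at hx ⊢
        calc ‖L j x‖ ≤ ‖L j‖ * ‖x‖ := (L j).le_opNorm x
          _ ≤ a * ‖x‖ := by gcongr; exact hL j
          _ < a * R := by gcongr
          _ = R * a := mul_comm _ _
      simp [hx, Set.indicator_of_mem (hmem _)]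
    · simp [hx]
  have hden : BLden nn p (fun j => (ball (0 : Euc (nn j)) (R * a)).indicator 1) =
      ENNReal.ofReal (R ^ (∑ j, p j * (nn j : ℝ))) *
        ∏ j, volume (ball (0 : Euc (nn j)) a) ^ p j := by
    have hs : ENNReal.ofReal (R ^ (∑ j, p j * (nn j : ℝ))) =
        ∏ j, ENNReal.ofReal (R ^ (nn j)) ^ p j := by
      rw [Real.rpow_sum_of_pos hR, ENNReal.ofReal_prod_of_nonneg fun j _ => by positivity]
      refine Finset.prod_congr rfl fun j _ => ?_
      rw [ENNReal.ofReal_rpow_of_nonneg (by positivity) (hp j).le, mul_comm,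
        Real.rpow_mul hR.le, Real.rpow_natCast]
    rw [hs, ← Finset.prod_mul_distrib]
    refine Finset.prod_congr rfl fun j _ => ?_
    rw [integral_indicator_one measurableSet_ball, Measure.real,
      ENNReal.ofReal_toReal measure_ball_lt_top.ne,
      Measure.addHaar_ball_mul_of_pos _ _ hR, finrank_euclideanSpace_fin,
      ENNReal.mul_rpow_of_nonneg _ _ (hp j).le]
  rw [← hden]
  exact hnum.trans key

/-- failure of the scaling condition forces an infinite Brascamp–Lieb constant. -/
theorem blconst_eq_top_of_scaling_fails {m n : ℕ} (nn : Fin m → ℕ)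
    (L : ∀ j, Euc n →L[ℝ] Euc (nn j)) (p : Fin m → ℝ)
    (hsurj : ∀ j, Function.Surjective (L j))
    (hp : ∀ j, p j ∈ Set.Ioc (0:ℝ) 1)
    (hscal : ∑ j, p j * (nn j : ℝ) ≠ (n : ℝ)) :
    BLconst nn L p = ⊤ := by
  refine sInf_eq_top.2 fun C hC => ?_
  by_contra hCtop
  set s := ∑ j, p j * (nn j : ℝ)
  have hd : (n : ℝ) - s ≠ 0 := sub_ne_zero.2 hscal.symm
  set a : ℝ := 1 + ∑ j, ‖L j‖
  have ha : 0 < a := by positivity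
  have hL : ∀ j, ‖L j‖ ≤ a := fun j => by
    have := Finset.single_le_sum (f := fun j => ‖L j‖) (fun i _ => norm_nonneg _)
      (Finset.mem_univ j)
    simp only [a]; linarith
  set D := ∏ j, volume (ball (0 : Euc (nn j)) a) ^ p j
  have hD : D ≠ ⊤ := ENNReal.prod_ne_top fun j _ =>
    ENNReal.rpow_ne_top_of_nonneg (hp j).1.le measure_ball_lt_top.ne
  set v := (volume (ball (0 : Euc n) 1)).toReal
  have hv : 0 < v := ENNReal.toReal_pos (measure_ball_pos _ _ one_pos).ne' measure_ball_lt_top.ne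
  have bound : ∀ R : ℝ, 0 < R → R ^ ((n : ℝ) - s) ≤ C.toReal * D.toReal / v := fun R hR => by
    have h := ENNReal.toReal_mono
      (ENNReal.mul_ne_top hCtop (ENNReal.mul_ne_top ENNReal.ofReal_ne_top hD))
      (bl_ball_test nn L p (fun j => (hp j).1) C hC a ha hL R hR)
    rw [ENNReal.toReal_mul, ENNReal.toReal_mul, ENNReal.toReal_mul,
      ENNReal.toReal_ofReal (by positivity), ENNReal.toReal_ofReal (by positivity)] at h
    rw [Real.rpow_sub hR, div_le_div_iff₀ (by positivity) hv]
    linarith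
  -- Choose `R` so that `R ^ (n - s)` exceeds the bound by exactly `1`.
  set M := C.toReal * D.toReal / v
  have hM : 0 ≤ M := by positivity
  have h := bound ((M + 1) ^ ((n : ℝ) - s)⁻¹) (by positivity)
  rw [← Real.rpow_mul (by positivity), inv_mul_cancel₀ hd, Real.rpow_one] at h
  linarith
end

section
/- Let (L,p) be a Brascamp–Lieb datum with surjective linear maps L_j : ℝ^n → ℝ^{n_j} and p_j ∈ [0,1], and suppose BL(L,p) < ∞. If g = (g_j) is an extremiser with ∫ g_j = 1 for all j, i.e. BL(L,p; g) = BL(L,p), then for every m-tuple f = (f_j) of nonnegative integrable functions with ∫ f_j = 1 for all j, BL(L,p; f) ≤ BL(L,p; f*g), where f*g = (f_j * g_j)_{j=1}^m. -/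
/-!
The proof is K. Ball's inequality. Write `F = ∏ (f_j ∘ L_j)^{p_j}` and `G = ∏ (g_j ∘ L_j)^{p_j}`.
By Tonelli and linearity of the `L_j`,
`∫ F · ∫ G = ∫∫ F(x) G(y - x) dx dy = ∫∫ ∏ (f_j(L_j x) g_j(L_j y - L_j x))^{p_j} dx dy`,
and for fixed `y` the inner integral is at most `BL(L,p) ∏ ((f_j * g_j)(L_j y))^{p_j}` by the
Brascamp–Lieb inequality. Hence `∫ F · ∫ G ≤ BL(L,p) · BL(L,p; f * g)` (`BLnum_mul_BLnum_le`).
As `g` is a normalised extremiser, `∫ G = BL(L,p)`, and this factor cancels; if it is zero,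
then `BL(L,p; f) ≤ BL(L,p) = 0` directly.

The inner functions may have vanishing integral, a case the supremum `BLsup` does not see;
`BLnum_le` covers it. Surjectivity of `L_j` transfers almost-everywhere statements on the
target to the source.
-/

open MeasureTheory ENNReal Real Metric Matrix

noncomputable def conv {k : ℕ} (f g : Euc k → ℝ) : Euc k → ℝ := fun x => ∫ y, f y * g (x - y)

/-- Surjective linear maps pull null sets back to null sets. -/
lemma quasiMeasurePreserving_of_surjective {n k : ℕ} (L : Euc n →L[ℝ] Euc k)
    (hL : Function.Surjective L) :
    Measure.QuasiMeasurePreserving L (volume : Measure (Euc n)) (volume : Measure (Euc k)) := by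
  obtain ⟨c, -, hc⟩ := LinearMap.exists_map_addHaar_eq_smul_addHaar (L : Euc n →ₗ[ℝ] Euc k)
    (volume : Measure (Euc n)) (volume : Measure (Euc k)) hL
  refine ⟨L.continuous.measurable, ?_⟩
  have hc' : Measure.map L (volume : Measure (Euc n)) = c • (volume : Measure (Euc k)) := hc
  rw [hc']
  exact Measure.smul_absolutelyContinuous

lemma BLden_eq_one {m : ℕ} (nn : Fin m → ℕ) (p : Fin m → ℝ)
    (f : ∀ j, Euc (nn j) → ℝ) (hf : ∀ j, ∫ y, f j y = 1) : BLden nn p f = 1 := by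
  simp [BLden, hf]

lemma BLfun_eq_BLnum {m n : ℕ} (nn : Fin m → ℕ)
    (L : ∀ j, Euc n →L[ℝ] Euc (nn j)) (p : Fin m → ℝ)
    (f : ∀ j, Euc (nn j) → ℝ) (hf : ∀ j, ∫ y, f j y = 1) :
    BLfun nn L p f = BLnum nn L p f := by
  rw [BLfun, BLden_eq_one nn p f hf, div_one]

lemma BLnum_le_of_input {m n : ℕ} (nn : Fin m → ℕ)
    (L : ∀ j, Euc n →L[ℝ] Euc (nn j)) (p : Fin m → ℝ) (hp : ∀ j, 0 ≤ p j)
    (h : ∀ j, Euc (nn j) → ℝ) (hh : BLinput nn h) :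
    BLnum nn L p h ≤ BLsup nn L p * BLden nn p h := by
  have h1 : BLfun nn L p h ≤ BLsup nn L p := le_iSup₂_of_le h hh le_rfl
  have h0 : BLden nn p h ≠ 0 := by
    refine Finset.prod_ne_zero_iff.mpr fun j _ => ?_
    exact (ENNReal.rpow_pos (ENNReal.ofReal_pos.mpr (hh.2.2 j)) ENNReal.ofReal_ne_top).ne'
  have ht : BLden nn p h ≠ ⊤ :=
    ENNReal.prod_ne_top fun j _ => ENNReal.rpow_ne_top_of_nonneg (hp j) ENNReal.ofReal_ne_top
  exact (ENNReal.div_le_iff h0 ht).mp h1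

/-- The Brascamp–Lieb inequality with constant `BLsup` extends to inputs some of whose integrals
vanish. If `∫ h j = 0` with `p j > 0` the left-hand side is zero; if `p j = 0` the `j`-th function
is irrelevant to both sides (as `0 ^ 0 = 1`) and can be replaced by the probability density
`g j`. -/
lemma BLnum_le {m n : ℕ} (nn : Fin m → ℕ)
    (L : ∀ j, Euc n →L[ℝ] Euc (nn j)) (p : Fin m → ℝ) (hp : ∀ j, 0 ≤ p j)
    (hsurj : ∀ j, Function.Surjective (L j))
    (g : ∀ j, Euc (nn j) → ℝ)
    (hg0 : ∀ j, ∀ x, 0 ≤ g j x) (hgi : ∀ j, Integrable (g j))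
    (hg1 : ∀ j, ∫ y, g j y = 1)
    (h : ∀ j, Euc (nn j) → ℝ) (hh0 : ∀ j, ∀ x, 0 ≤ h j x) (hhi : ∀ j, Integrable (h j)) :
    BLnum nn L p h ≤ BLsup nn L p * BLden nn p h := by
  classical
  by_cases hz : ∃ j, 0 < p j ∧ ∫ y, h j y = 0
  · obtain ⟨j, hj, hj0⟩ := hz
    have hae : ∀ᵐ x, h j (L j x) = 0 :=
      (quasiMeasurePreserving_of_surjective (L j) (hsurj j)).ae
        ((integral_eq_zero_iff_of_nonneg (hh0 j) (hhi j)).mp hj0)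
    have : BLnum nn L p h = 0 := by
      rw [BLnum, lintegral_congr_ae (g := fun _ => 0), lintegral_zero]
      filter_upwards [hae] with x hx
      refine Finset.prod_eq_zero (Finset.mem_univ j) ?_
      rw [hx, ENNReal.ofReal_zero, ENNReal.zero_rpow_of_pos hj]
    simp [this]
  · push Not at hz
    let h' : ∀ j, Euc (nn j) → ℝ := fun j => if p j = 0 then g j else h j
    have hin : BLinput nn h' := by
      refine ⟨fun j x => ?_, fun j => ?_, fun j => ?_⟩ <;> by_cases hj : p j = 0
      · simpa [h', hj] using hg0 j x
      · simpa [h', hj] using hh0 j x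
      · simpa [h', hj] using hgi j
      · simpa [h', hj] using hhi j
      · simp [h', hj, hg1]
      · simpa [h', hj] using lt_of_le_of_ne (integral_nonneg (hh0 j))
          (hz j (lt_of_le_of_ne (hp j) (Ne.symm hj))).symm
    have hnum : BLnum nn L p h' = BLnum nn L p h := by
      refine lintegral_congr fun x => Finset.prod_congr rfl fun j _ => ?_
      by_cases hj : p j = 0 <;> simp [h', hj]
    have hden : BLden nn p h' = BLden nn p h := by
      refine Finset.prod_congr rfl fun j _ => ?_
      by_cases hj : p j = 0 <;> simp [h', hj]
    rw [← hnum, ← hden]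
    exact BLnum_le_of_input nn L p hp h' hin

lemma aemeasurable_BL_integrand {m n : ℕ} (nn : Fin m → ℕ)
    (L : ∀ j, Euc n →L[ℝ] Euc (nn j)) (p : Fin m → ℝ)
    (hsurj : ∀ j, Function.Surjective (L j))
    (f : ∀ j, Euc (nn j) → ℝ) (hf : ∀ j, Integrable (f j)) :
    AEMeasurable (fun x => ∏ j, (ENNReal.ofReal (f j (L j x))) ^ (p j)) := by
  refine Finset.aemeasurable_fun_prod _ fun j _ => AEMeasurable.pow_const ?_ _
  exact ((hf j).aemeasurable.comp_quasiMeasurePreserving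
    (quasiMeasurePreserving_of_surjective (L j) (hsurj j))).ennreal_ofReal

lemma lintegral_mul_lintegral_eq {n : ℕ} (F G : Euc n → ℝ≥0∞)
    (hF : AEMeasurable F) (hG : AEMeasurable G) :
    (∫⁻ x, F x) * ∫⁻ y, G y = ∫⁻ y, ∫⁻ x, F x * G (y - x) := by
  have hsub : AEMeasurable (fun z : Euc n × Euc n => G (z.1 - z.2))
      ((volume : Measure (Euc n)).prod volume) :=
    hG.comp_quasiMeasurePreserving
      (quasiMeasurePreserving_sub_of_right_invariant volume volume)
  have hsnd : AEMeasurable (fun z : Euc n × Euc n => F z.2)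
      ((volume : Measure (Euc n)).prod volume) :=
    hF.comp_quasiMeasurePreserving Measure.quasiMeasurePreserving_snd
  rw [lintegral_lintegral_swap (hsnd.mul hsub), ← lintegral_mul_const'' _ hF]
  refine lintegral_congr fun x => ?_
  have hx : AEMeasurable (fun y => G (y - x)) :=
    hG.comp_quasiMeasurePreserving (measurePreserving_sub_right volume x).quasiMeasurePreserving
  rw [lintegral_const_mul'' _ hx, lintegral_sub_right_eq_self G x]

/-- Ball's inequality. For fixed `y`, the Brascamp–Lieb inequality is applied to the functions
`z ↦ f j z * g j (L j y - z)`, whose integrals are the values of `conv (f j) (g j)` at `L j y`. -/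
lemma BLnum_mul_BLnum_le {m n : ℕ} (nn : Fin m → ℕ)
    (L : ∀ j, Euc n →L[ℝ] Euc (nn j)) (p : Fin m → ℝ) (hp : ∀ j, 0 ≤ p j)
    (hsurj : ∀ j, Function.Surjective (L j))
    (hfin : BLsup nn L p < ⊤)
    (f g : ∀ j, Euc (nn j) → ℝ)
    (hf0 : ∀ j, ∀ x, 0 ≤ f j x) (hfi : ∀ j, Integrable (f j))
    (hg0 : ∀ j, ∀ x, 0 ≤ g j x) (hgi : ∀ j, Integrable (g j))
    (hg1 : ∀ j, ∫ y, g j y = 1) :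
    BLnum nn L p f * BLnum nn L p g ≤
      BLsup nn L p * BLnum nn L p (fun j => conv (f j) (g j)) := by
  set F : Euc n → ℝ≥0∞ := fun x => ∏ j, (ENNReal.ofReal (f j (L j x))) ^ (p j) with hF
  set G : Euc n → ℝ≥0∞ := fun x => ∏ j, (ENNReal.ofReal (g j (L j x))) ^ (p j) with hG
  have hFm : AEMeasurable F := aemeasurable_BL_integrand nn L p hsurj f hfi
  have hGm : AEMeasurable G := aemeasurable_BL_integrand nn L p hsurj g hgi
  have hprod : BLnum nn L p f * BLnum nn L p g = ∫⁻ y, ∫⁻ x, F x * G (y - x) :=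
    lintegral_mul_lintegral_eq F G hFm hGm
  rw [hprod, BLnum, ← lintegral_const_mul' _ _ hfin.ne]
  -- The integrand defining the convolution is integrable for almost every `y` only.
  have hex : ∀ᵐ y : Euc n, ∀ j, Integrable (fun z => f j z * g j (L j y - z)) := by
    rw [ae_all_iff]
    intro j
    exact (quasiMeasurePreserving_of_surjective (L j) (hsurj j)).ae
      ((hfi j).ae_convolution_exists (ContinuousLinearMap.mul ℝ ℝ) (hgi j))
  refine lintegral_mono_ae ?_
  filter_upwards [hex] with y hy
  have key := BLnum_le nn L p hp hsurj g hg0 hgi hg1 (fun j z => f j z * g j (L j y - z))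
    (fun j z => mul_nonneg (hf0 j z) (hg0 j _)) hy
  refine le_trans (le_of_eq ?_) key
  refine lintegral_congr fun x => ?_
  rw [hF, hG, ← Finset.prod_mul_distrib]
  refine Finset.prod_congr rfl fun j _ => ?_
  rw [ENNReal.ofReal_mul (hf0 j _), ENNReal.mul_rpow_of_nonneg _ _ (hp j), map_sub]

lemma integral_conv {k : ℕ} (f g : Euc k → ℝ) (hf : Integrable f) (hg : Integrable g) :
    ∫ x, conv f g x = (∫ x, f x) * ∫ x, g x :=
  integral_convolution (ContinuousLinearMap.mul ℝ ℝ) hf hg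

/-- convolving with a normalised extremiser does not decrease the
Brascamp–Lieb functional. -/
theorem blfun_le_blfun_conv_extremiser {m n : ℕ} (nn : Fin m → ℕ)
    (L : ∀ j, Euc n →L[ℝ] Euc (nn j)) (p : Fin m → ℝ)
    (hsurj : ∀ j, Function.Surjective (L j))
    (hp : ∀ j, p j ∈ Set.Icc (0:ℝ) 1)
    (hfin : BLsup nn L p < ⊤)
    (g : ∀ j, Euc (nn j) → ℝ)
    (hg0 : ∀ j, ∀ x, 0 ≤ g j x) (hgi : ∀ j, Integrable (g j))
    (hg1 : ∀ j, ∫ y, g j y = 1)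
    (hgext : BLfun nn L p g = BLsup nn L p) :
    ∀ f : ∀ j, Euc (nn j) → ℝ,
      (∀ j, ∀ x, 0 ≤ f j x) → (∀ j, Integrable (f j)) → (∀ j, ∫ y, f j y = 1) →
      BLfun nn L p f ≤ BLfun nn L p (fun j => conv (f j) (g j)) := by
  intro f hf0 hfi hf1
  have hp0 : ∀ j, 0 ≤ p j := fun j => (hp j).1
  have hc1 : ∀ j, ∫ y, conv (f j) (g j) y = 1 := fun j => by
    rw [integral_conv _ _ (hfi j) (hgi j), hf1, hg1, one_mul]
  have hball := BLnum_mul_BLnum_le nn L p hp0 hsurj hfin f g hf0 hfi hg0 hgi hg1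
  have hle : BLfun nn L p f ≤ BLsup nn L p :=
    le_iSup₂_of_le f ⟨hf0, hfi, fun j => by simp [hf1 j]⟩ le_rfl
  rw [BLfun_eq_BLnum nn L p g hg1] at hgext
  rw [BLfun_eq_BLnum nn L p f hf1] at hle ⊢
  rw [BLfun_eq_BLnum nn L p _ hc1]
  rw [hgext, mul_comm] at hball
  by_cases h0 : BLsup nn L p = 0
  · exact (hle.trans h0.le).trans zero_le
  · exact (ENNReal.mul_le_mul_iff_right h0 hfin.ne).mp hball
end

section
/- Let B = (B_j)_{j=1}^m be C² submersions defined on a neighbourhood of 0 in ℝ^n, taking values in ℝ^{n_j}, such that the datum (dB(0), p) is simple with p_j ∈ (0,1), and fix parameters α > 1 and β' > 0 with α + β' < 2. Then there exists ν > 0 such that the following holds: for every u ∈ U_ν(0), every κ > 1, and all δ ∈ (0,ν) and μ > 0 with δ^{α+β'} ≤ μ, one has ∫_{U_δ(u)} ∏_{j=1}^m f_j(B_j(y))^{p_j} dy ≤ κ^σ BL(dB(u), p) ∏_{j=1}^m (∫_{ℝ^{n_j}} f_j)^{p_j} for all f_j ∈ L¹(B_j(2U_δ(u)); μ, κ), where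 σ = ∑_{j=1}^m p_j. Equivalently, 𝒞(u,δ,μ,κ) ≤ κ^σ BL(dB(u), p). -/
/-!
On `U_δ(u)` Taylor's theorem says that `B_j` differs from its affine approximation
`y ↦ B_j(u) + dB_j(u)(y - u)` by at most `K (δ log (1/δ))²`, with `K` uniform for `u` near `0`
(`exists_taylor_bound`). Since `α + β' < 2`, this is at most `δ ^ (α + β') ≤ μ` once `δ` is small
(`eventually_small_scale`), so `κ`-constancy at scale `μ` bounds `f_j(B_j(y))` by
`κ f_j(B_j(u) + dB_j(u)(y - u))`. Taking the product of the `p_j`-th powers costs `κ ^ σ`, and what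
remains is the linear inequality for `dB(u)` (`BLnum_le_BLconst_mul`) applied to the translates
`f_j(· + B_j(u))`.
-/

open MeasureTheory ENNReal Real Metric Matrix

/-- The infimum defining `BLconst` is attained. Surjectivity of the maps matters only for inputs
with `BLden = 0`: there the right-hand side is `0` even if `BLconst = ⊤`, and the left-hand side
vanishes because preimages of null sets under surjective linear maps are null. -/
theorem BLnum_le_BLconst_mul {m n : ℕ} (nn : Fin m → ℕ)
    (L : ∀ j, Euc n →L[ℝ] Euc (nn j)) (p : Fin m → ℝ) (hp : ∀ j, 0 < p j)
    (hL : ∀ j, Function.Surjective (L j)) (f : ∀ j, Euc (nn j) → ℝ)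
    (hf0 : ∀ j, ∀ x, 0 ≤ f j x) (hf : ∀ j, Integrable (f j)) :
    BLnum nn L p f ≤ BLconst nn L p * BLden nn p f := by
  by_cases hden : BLden nn p f = 0
  · obtain ⟨j, -, hj⟩ := Finset.prod_eq_zero_iff.1 hden
    have hint : ∫ y, f j y = 0 := by
      rcases ENNReal.rpow_eq_zero_iff.1 hj with h | h
      · exact le_antisymm (ENNReal.ofReal_eq_zero.1 h.1) (integral_nonneg (hf0 j))
      · exact absurd h.1 ENNReal.ofReal_ne_top
    have hae : f j =ᵐ[volume] 0 := (integral_eq_zero_iff_of_nonneg (hf0 j) (hf j)).1 hint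
    -- `{f j = 0}` need not be measurable, so pass to a measurable null superset of its complement.
    obtain ⟨t, hst, ht, ht0⟩ := exists_measurable_superset_of_null (ae_iff.1 hae)
    have hcomp : ∀ᵐ x : Euc n, (L j : Euc n →ₗ[ℝ] Euc (nn j)) x ∈ tᶜ :=
      (ae_comp_linearMap_mem_iff (L j : Euc n →ₗ[ℝ] Euc (nn j)) volume volume (hL j)
        ht.compl).2 (by simpa [ae_iff] using ht0)
    have hnum : BLnum nn L p f = 0 := by
      unfold BLnum
      rw [← lintegral_zero (α := Euc n) (μ := volume)]
      refine lintegral_congr_ae ?_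
      filter_upwards [hcomp] with x hx
      have hx0 : f j (L j x) = 0 := by
        by_contra h
        exact hx (hst h)
      refine Finset.prod_eq_zero (Finset.mem_univ j) ?_
      rw [hx0, ENNReal.ofReal_zero, ENNReal.zero_rpow_of_pos (hp j)]
    simp [hnum]
  · have htop : BLden nn p f ≠ ⊤ := by
      unfold BLden
      exact ENNReal.prod_ne_top fun j _ =>
        ENNReal.rpow_ne_top_of_nonneg (hp j).le ENNReal.ofReal_ne_top
    rw [← ENNReal.div_le_iff hden htop]
    exact le_sInf fun C hC => (ENNReal.div_le_iff hden htop).2 (hC f hf0 hf)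

/-- Second-order Taylor bound with a constant uniform in the base point near `0`. -/
theorem exists_taylor_bound {n k : ℕ} (B : Euc n → Euc k) (V : Set (Euc n)) (hV : IsOpen V)
    (h0V : (0 : Euc n) ∈ V) (hB : ContDiffOn ℝ 2 B V) :
    ∃ K : ℝ, 0 ≤ K ∧ ∃ r > 0, ∀ u ∈ ball (0 : Euc n) r, ∀ y ∈ ball (0 : Euc n) r,
      ‖B y - B u - fderiv ℝ B u (y - u)‖ ≤ K * ‖y - u‖ ^ 2 := by
  have hB0 : ContDiffAt ℝ 2 B 0 := hB.contDiffAt (hV.mem_nhds h0V)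
  have hd : ContDiffAt ℝ 1 (fderiv ℝ B) 0 := hB0.fderiv_right (by norm_num [one_add_one_eq_two])
  obtain ⟨K, t, ht, hK⟩ := hd.exists_lipschitzOnWith
  obtain ⟨r, hr, hrt⟩ := Metric.mem_nhds_iff.1 (Filter.inter_mem ht (hV.mem_nhds h0V))
  refine ⟨K, K.2, r, hr, fun u hu y hy => ?_⟩
  have hmain := Convex.norm_image_sub_le_of_norm_fderiv_le' (𝕜 := ℝ) (f := B)
    (φ := fderiv ℝ B u) (C := K * ‖y - u‖) (s := ball 0 r ∩ closedBall u ‖y - u‖) (x := u) (y := y)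
    (fun x hx => (hB.contDiffAt (hV.mem_nhds (hrt hx.1).2)).differentiableAt (by norm_num))
    (fun x hx => by
      have h1 := hK.dist_le_mul x (hrt hx.1).1 u (hrt hu).1
      rw [dist_eq_norm] at h1
      exact h1.trans (mul_le_mul_of_nonneg_left hx.2 K.2))
    ((convex_ball _ _).inter (convex_closedBall _ _))
    ⟨hu, mem_closedBall_self (norm_nonneg _)⟩ ⟨hy, by simp [dist_eq_norm]⟩
  linarith [hmain, show (K : ℝ) * ‖y - u‖ * ‖y - u‖ = K * ‖y - u‖ ^ 2 by ring]

/-- For small `δ` the radius `δ log (1/δ)` is small, and its square is dominated by `δ ^ s` for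
every exponent `s < 2`. -/
theorem eventually_small_scale (K r s : ℝ) (hr : 0 < r) (hs : s < 2) :
    ∀ᶠ δ in nhdsWithin (0 : ℝ) (Set.Ioi 0),
      δ * Real.log (1 / δ) < r ∧ K * (δ * Real.log (1 / δ)) ^ 2 ≤ δ ^ s := by
  have h1 := (tendsto_log_mul_rpow_nhdsGT_zero zero_lt_one).neg
  have h2 := ((tendsto_log_mul_rpow_nhdsGT_zero
    (show (0 : ℝ) < (2 - s) / 2 by linarith)).pow 2).const_mul K
  simp only [neg_zero, ne_eq, OfNat.ofNat_ne_zero, not_false_eq_true, zero_pow, mul_zero] at h1 h2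
  filter_upwards [h1.eventually_lt_const hr, h2.eventually_lt_const zero_lt_one,
    self_mem_nhdsWithin] with δ hδ1 hδ2 hδ
  have hδ0 : 0 < δ := hδ
  rw [one_div, Real.log_inv]
  constructor
  · rw [Real.rpow_one] at hδ1
    linarith
  · have hpow : (δ ^ ((2 - s) / 2)) ^ 2 * δ ^ s = δ ^ 2 := by
      rw [← Real.rpow_natCast, ← Real.rpow_mul hδ0.le, ← Real.rpow_add hδ0, ← Real.rpow_natCast]
      congr 1
      push_cast
      ring
    calc K * (δ * -Real.log δ) ^ 2 = K * Real.log δ ^ 2 * δ ^ 2 := by ring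
      _ = K * (Real.log δ * δ ^ ((2 - s) / 2)) ^ 2 * δ ^ s := by rw [← hpow]; ring
      _ ≤ 1 * δ ^ s := by gcongr
      _ = δ ^ s := one_mul _

/-- the base case of the induction on scales. -/
theorem nonlinear_bl_base_case {m n : ℕ} (nn : Fin m → ℕ)
    (B : ∀ j, Euc n → Euc (nn j)) (p : Fin m → ℝ)
    (hp : ∀ j, p j ∈ Set.Ioo (0:ℝ) 1)
    (V : Set (Euc n)) (hV : IsOpen V) (h0V : (0 : Euc n) ∈ V)
    (hB : ∀ j, ContDiffOn ℝ 2 (B j) V)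
    (hsub : ∀ j, ∀ x ∈ V, Function.Surjective (fderiv ℝ (B j) x))
    (hsimple : BLsimple nn (fun j => fderiv ℝ (B j) 0) p)
    (α β' : ℝ) (hα : 1 < α) (hβ' : 0 < β') (hαβ' : α + β' < 2) :
    ∃ ν > 0, ∀ u ∈ Udelta ν (0 : Euc n), ∀ κ : ℝ, 1 < κ →
      ∀ δ ∈ Set.Ioo (0:ℝ) ν, ∀ μ : ℝ, 0 < μ → δ ^ (α + β') ≤ μ →
      (∀ f : ∀ j, Euc (nn j) → ℝ,
        (∀ j, MemL1On (B j '' Metric.closedBall u (2 * (δ * Real.log (1/δ)))) μ κ (f j)) →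
        ∫⁻ y in Udelta δ u, ∏ j, (ENNReal.ofReal (f j (B j y))) ^ (p j) ≤
          ENNReal.ofReal (κ ^ (∑ j, p j)) * BLconst nn (fun j => fderiv ℝ (B j) u) p *
            ∏ j, (ENNReal.ofReal (∫ z, f j z)) ^ (p j)) ∧
      nlBLconst nn B p u δ μ κ ≤
        ENNReal.ofReal (κ ^ (∑ j, p j)) * BLconst nn (fun j => fderiv ℝ (B j) u) p := by
  choose K hK r hr hT using fun j => exists_taylor_bound (B j) V hV h0V (hB j)
  obtain ⟨r₀, hr₀, hrV⟩ := Metric.isOpen_iff.1 hV 0 h0V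
  -- A radius, valid for every `j` at once, on which all the Taylor bounds hold and which fits in `V`.
  obtain ⟨ρ, hρ, hρr₀, hρr⟩ : ∃ ρ > 0, ρ ≤ r₀ ∧ ∀ j, ρ ≤ r j := by
    have h : ∀ᶠ ρ in nhdsWithin (0 : ℝ) (Set.Ioi 0), 0 < ρ ∧ ρ ≤ r₀ ∧ ∀ j, ρ ≤ r j := by
      refine eventually_mem_nhdsWithin.and (.and ?_ (Filter.eventually_all.2 fun j => ?_))
      · exact nhdsWithin_le_nhds (eventually_le_nhds hr₀)
      · exact nhdsWithin_le_nhds (eventually_le_nhds (hr j))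
    obtain ⟨ρ, h1, h2, h3⟩ := h.exists
    exact ⟨ρ, h1, h2, h3⟩
  -- The index `none` records the radius bound alone, which is needed even when `m = 0`.
  have hsmall : ∀ᶠ δ in nhdsWithin (0 : ℝ) (Set.Ioi 0), ∀ j : Option (Fin m),
      δ * Real.log (1 / δ) < ρ / 2 ∧
        j.elim 0 K * (δ * Real.log (1 / δ)) ^ 2 ≤ δ ^ (α + β') :=
    Filter.eventually_all.2 fun j => eventually_small_scale _ _ _ (half_pos hρ) hαβ'
  obtain ⟨ε, hε, hεs⟩ := (mem_nhdsGT_iff_exists_Ioo_subset).1 hsmall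
  have hε0 : 0 < ε := hε
  refine ⟨ε / 2, half_pos hε0, fun u hu κ hκ δ hδ μ hμ hδμ => ?_⟩
  have hR := fun j => hεs (show δ ∈ Set.Ioo 0 ε from ⟨hδ.1, by linarith [hδ.2]⟩) j
  have huρ : ‖u‖ < ρ / 2 := by
    have h1 := (hεs (show ε / 2 ∈ Set.Ioo 0 ε from ⟨by linarith, by linarith⟩) none).1
    have h2 : ‖u‖ ≤ ε / 2 * Real.log (1 / (ε / 2)) := by simpa [Udelta] using hu
    linarith
  have huV : u ∈ V := hrV (by rw [mem_ball_zero_iff]; linarith)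
  have key : ∀ f : ∀ j, Euc (nn j) → ℝ,
      (∀ j, MemL1On (B j '' Metric.closedBall u (2 * (δ * Real.log (1/δ)))) μ κ (f j)) →
      ∫⁻ y in Udelta δ u, ∏ j, (ENNReal.ofReal (f j (B j y))) ^ (p j) ≤
        ENNReal.ofReal (κ ^ (∑ j, p j)) * BLconst nn (fun j => fderiv ℝ (B j) u) p *
          ∏ j, (ENNReal.ofReal (∫ z, f j z)) ^ (p j) := by
    intro f hf
    have hpt : ∀ y ∈ Udelta δ u, ∀ j,
        f j (B j y) ≤ κ * f j (fderiv ℝ (B j) u (y - u) + B j u) := by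
      intro y hy j
      have hyu : ‖y - u‖ ≤ δ * Real.log (1 / δ) := by
        rw [← dist_eq_norm]
        exact hy
      have hyu0 := norm_nonneg (y - u)
      have hRρ := (hR none).1
      refine (hf j).2.2 _ ⟨y, ?_, rfl⟩ _ ?_
      · rw [mem_closedBall, dist_eq_norm]
        linarith
      · have hy0 : ‖y‖ < ρ := by linarith [norm_le_norm_add_norm_sub' y u]
        have h1 := hT j u (by rw [mem_ball_zero_iff]; linarith [hρr j]) y
          (by rw [mem_ball_zero_iff]; linarith [hρr j])
        rw [dist_eq_norm]
        calc ‖B j y - (fderiv ℝ (B j) u (y - u) + B j u)‖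
            = ‖B j y - B j u - fderiv ℝ (B j) u (y - u)‖ := by congr 1; abel
          _ ≤ K j * ‖y - u‖ ^ 2 := h1
          _ ≤ K j * (δ * Real.log (1 / δ)) ^ 2 := by
            have := hK j
            gcongr
          _ ≤ δ ^ (α + β') := (hR (some j)).2
          _ ≤ μ := hδμ
    have hκ0 : 0 < κ := by linarith
    have hκσ : ENNReal.ofReal (κ ^ (∑ j, p j)) = ∏ j, ENNReal.ofReal κ ^ (p j) := by
      rw [Real.rpow_sum_of_pos hκ0, ENNReal.ofReal_prod_of_nonneg fun j _ => by positivity]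
      exact Finset.prod_congr rfl fun j _ => (ENNReal.ofReal_rpow_of_pos hκ0).symm
    have hlin := BLnum_le_BLconst_mul nn (fun j => fderiv ℝ (B j) u) p (fun j => (hp j).1)
      (fun j => hsub j u huV) (fun j z => f j (z + B j u)) (fun j z => (hf j).1 _)
      (fun j => (hf j).2.1.comp_add_right _)
    have hden : BLden nn p (fun j z => f j (z + B j u)) =
        ∏ j, (ENNReal.ofReal (∫ z, f j z)) ^ (p j) := by
      unfold BLden
      exact Finset.prod_congr rfl fun j _ => by rw [integral_add_right_eq_self (f j) (B j u)]
    calc ∫⁻ y in Udelta δ u, ∏ j, (ENNReal.ofReal (f j (B j y))) ^ (p j)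
        ≤ ∫⁻ y in Udelta δ u, ENNReal.ofReal (κ ^ (∑ j, p j)) *
            ∏ j, (ENNReal.ofReal (f j (fderiv ℝ (B j) u (y - u) + B j u))) ^ (p j) := by
          refine setLIntegral_mono' isClosed_closedBall.measurableSet fun y hy => ?_
          rw [hκσ, ← Finset.prod_mul_distrib]
          refine Finset.prod_le_prod' fun j _ => ?_
          rw [← ENNReal.mul_rpow_of_nonneg _ _ (hp j).1.le, ← ENNReal.ofReal_mul hκ0.le]
          exact ENNReal.rpow_le_rpow (ENNReal.ofReal_le_ofReal (hpt y hy j)) (hp j).1.le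
      _ ≤ ∫⁻ y, ENNReal.ofReal (κ ^ (∑ j, p j)) *
            ∏ j, (ENNReal.ofReal (f j (fderiv ℝ (B j) u (y - u) + B j u))) ^ (p j) :=
          setLIntegral_le_lintegral _ _
      _ = ENNReal.ofReal (κ ^ (∑ j, p j)) *
            BLnum nn (fun j => fderiv ℝ (B j) u) p (fun j z => f j (z + B j u)) := by
          rw [lintegral_const_mul' _ _ ENNReal.ofReal_ne_top]
          congr 1
          exact lintegral_sub_right_eq_self (fun y =>
            ∏ j, (ENNReal.ofReal (f j (fderiv ℝ (B j) u y + B j u))) ^ (p j)) u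
      _ ≤ ENNReal.ofReal (κ ^ (∑ j, p j)) * (BLconst nn (fun j => fderiv ℝ (B j) u) p *
            ∏ j, (ENNReal.ofReal (∫ z, f j z)) ^ (p j)) := by
          rw [← hden]
          gcongr
      _ = _ := (mul_assoc _ _ _).symm
  exact ⟨key, sInf_le key⟩
end

section
/- Let B = (B_j)_{j=1}^m be C² submersions defined on a neighbourhood of 0 in ℝ^n, taking values in ℝ^{n_j}, with (dB(0), p) simple and p_j ∈ (0,1), and fix parameters α > 1 and β, β' with 0 < β < β' < 2 − α. Suppose u ↦ A_{u,j} are positive definite n_j × n_j matrices, defined for u in a neighbourhood of 0 and depending continuously on u, such that the L¹-normalised gaussians g_{u,j}(x) = det(A_{u,j})^{1/2} e^{−π⟨A_{u,j} x, x⟩} extremise the linear Brascamp–Lieb inequality for (dB(u), p). Then there exists ν > 0 such that for all δ ∈ (0,ν) and μ > 0 satisfying the threshold condition δ^{α+β'} > μ, for all u ∈ U_ν(0), all x ∈ 2U_δ(u) and each 1 ≤ j ≤ m, the function w ↦ g_{u,δ^α,j}(L_j^u x − w) is e^{δ^β}-constant at scale μ on B_j(2U_{δ^α}(x)), where g_{u,ρ,j}(w)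 = ρ^{−n_j} g_{u,j}(w/ρ) and L_j^u x = B_j(u) + dB_j(u)(x − u). -/
/-!
The gaussian `w ↦ g_{u,ρ,j}(c - w)` with `ρ = δ ^ α` and `c = B_j(u) + dB_j(u)(x - u)` is, up to a
constant factor, `exp (-π Q ((c - w) / ρ))` for the quadratic form `Q` of `A_{u,j}`. If `w` is
replaced by `w'` with `|w - w'| ≤ μ < δ ^ (α + β')`, the argument of `Q` moves by at most `δ ^ β'`,
so the exponent changes by `O(δ ^ β' (1 + |c - w| / ρ))` (`gaussScaled_le`). For `w = B_j(z)` with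
`z ∈ 2U_ρ(x)`, write `c - w = (c - B_j(x)) + (B_j(x) - B_j(z))`: the first term is
`O((δ log (1/δ))²)`, by Taylor's theorem, which is `O(ρ)` since `α < 2`; the second is
`O(ρ log (1/δ))` since `B_j` is Lipschitz near `0` (`exists_local_bounds`). Hence the exponent
changes by `O(δ ^ β' log (1/δ))`, which is at most `δ ^ β` for small `δ` because `β < β'`
(`eventually_thresholds`). The constants are uniform in `u` because `B_j` is `C²` and `A` is
continuous near `0`.
-/

open MeasureTheory ENNReal Real Metric Matrix

/-- The matrix `M_u = ∑ p_j dB_j(u)^* A_{u,j} dB_j(u)`, as a continuous linear map on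
euclidean space. -/
noncomputable def Mmap {m n : ℕ} (nn : Fin m → ℕ)
    (B : ∀ j, Euc n → Euc (nn j)) (p : Fin m → ℝ)
    (A : Euc n → ∀ j, Matrix (Fin (nn j)) (Fin (nn j)) ℝ) (u : Euc n) :
    Euc n →L[ℝ] Euc n :=
  ∑ j, p j • (ContinuousLinearMap.adjoint (fderiv ℝ (B j) u) ∘L
    ((Matrix.toEuclideanCLM (𝕜 := ℝ) (A u j)) ∘L fderiv ℝ (B j) u))

/-- Uniform bounds near `0` for one of the maps and its gaussian: a bound on the matrix, a Lipschitz
bound on the map, and a second-order Taylor bound with an arbitrary base point. -/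
lemma exists_local_bounds {n k : ℕ} (F : Euc n → Euc k) (hF : ContDiffAt ℝ 2 F 0)
    (M : Euc n → Matrix (Fin k) (Fin k) ℝ) (hM : ContinuousAt M 0) :
    ∃ K > 0, ∃ r > 0, ∀ u ∈ Metric.ball (0 : Euc n) r, ∀ x ∈ Metric.ball (0 : Euc n) r,
      ‖Matrix.toEuclideanCLM (𝕜 := ℝ) (M u)‖ ≤ K ∧
      ‖F x - F u‖ ≤ K * ‖x - u‖ ∧
      ‖F x - F u - fderiv ℝ F u (x - u)‖ ≤ K * ‖x - u‖ ^ 2 := by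
  have hMc : ContinuousAt (fun u => ‖Matrix.toEuclideanCLM (𝕜 := ℝ) (M u)‖) 0 := by
    have h1 : Continuous (fun N : Matrix (Fin k) (Fin k) ℝ =>
        Matrix.toEuclideanCLM (n := Fin k) (𝕜 := ℝ) N) :=
      LinearMap.continuous_of_finiteDimensional
        ((Matrix.toEuclideanCLM (n := Fin k) (𝕜 := ℝ)).toAlgEquiv.toLinearMap)
    exact (h1.norm.continuousAt (x := M 0)).comp hM
  obtain ⟨K₁, s, hs, hK₁⟩ := (hF.of_le (by norm_num : (1 : WithTop ℕ∞) ≤ 2)).exists_lipschitzOnWith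
  obtain ⟨K₂, t, ht, hK₂⟩ :=
    (hF.fderiv_right (m := 1) (by norm_num)).exists_lipschitzOnWith
  have hdiff : ∀ᶠ x in nhds (0 : Euc n), DifferentiableAt ℝ F x :=
    (hF.eventually (by simp)).mono fun x hx => hx.differentiableAt (by norm_num)
  have hbd := hMc.eventually_lt_const (lt_add_one _)
  obtain ⟨r, hr, hball⟩ := Metric.mem_nhds_iff.1
    (Filter.inter_mem (Filter.inter_mem hs ht) (Filter.inter_mem hdiff hbd))
  set N := ‖Matrix.toEuclideanCLM (𝕜 := ℝ) (M 0)‖ + 1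
  have hN : 0 < N := by positivity
  refine ⟨N + K₁ + K₂, by positivity, r, hr, fun u hu x hx => ⟨?_, ?_, ?_⟩⟩
  · have := (hball hu).2.2
    simp only [Set.mem_ofPred_eq] at this
    linarith [K₁.2, K₂.2]
  · have := hK₁.norm_sub_le (hball hx).1.1 (hball hu).1.1
    refine this.trans ?_
    gcongr
    linarith [K₂.2]
  · set S := Metric.ball (0 : Euc n) r ∩ Metric.closedBall u ‖x - u‖
    have hS : Convex ℝ S := (convex_ball _ _).inter (convex_closedBall _ _)
    -- The derivative varies by at most `K₂ ‖x - u‖` on the convex set `S`.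
    have hTaylor := hS.norm_image_sub_le_of_norm_fderiv_le' (𝕜 := ℝ) (f := F)
      (φ := fderiv ℝ F u) (C := K₂ * ‖x - u‖) (x := u) (y := x)
      (fun y hy => (hball hy.1).2.1)
      (fun y hy => by
        refine (hK₂.norm_sub_le (hball hy.1).1.2 (hball hu).1.2).trans ?_
        gcongr
        simpa [dist_eq_norm] using hy.2)
      ⟨hu, by simp⟩ ⟨hx, by simp [dist_eq_norm]⟩
    refine hTaylor.trans ?_
    rw [mul_assoc, ← sq]
    gcongr
    linarith [K₁.2]

/-- Moving the argument of a scaled gaussian by at most `ρ h` changes the exponent by at most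
`π K h (2R + h)` on the ball of radius `ρ R`. -/
lemma gaussScaled_le {k : ℕ} (M : Matrix (Fin k) (Fin k) ℝ) {K ρ R h ε : ℝ} (hρ : 0 < ρ)
    (hM : ‖Matrix.toEuclideanCLM (𝕜 := ℝ) M‖ ≤ K) (a b : Euc k)
    (ha : ‖a‖ ≤ ρ * R) (hab : ‖b - a‖ ≤ ρ * h)
    (hε : π * (K * h * (2 * R + h)) ≤ ε) :
    gaussScaled M ρ a ≤ Real.exp ε * gaussScaled M ρ b := by
  have key : ∀ v w : Euc k, ‖v‖ ≤ R → ‖w - v‖ ≤ h →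
      (M.mulVec w ⬝ᵥ w) - (M.mulVec v ⬝ᵥ v) ≤ K * h * (2 * R + h) := by
    intro v w hv hwv
    set T := Matrix.toEuclideanCLM (𝕜 := ℝ) M with hT
    have hQ : ∀ z : Euc k, (M.mulVec z ⬝ᵥ z) = inner ℝ z (T z) := by
      intro z
      rw [hT, Matrix.inner_toEuclideanCLM, dotProduct_comm]
    have hw : ‖w‖ ≤ R + h := by
      calc ‖w‖ = ‖v + (w - v)‖ := by congr 1; abel
        _ ≤ ‖v‖ + ‖w - v‖ := norm_add_le _ _
        _ ≤ R + h := by linarith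
    have hh : 0 ≤ h := (norm_nonneg _).trans hwv
    have hR : 0 ≤ R := (norm_nonneg _).trans hv
    have hK : 0 ≤ K := (norm_nonneg _).trans hM
    have e : inner ℝ w (T w) - inner ℝ v (T v)
        = inner ℝ w (T (w - v)) + inner ℝ (w - v) (T v) := by
      simp only [map_sub, inner_sub_left, inner_sub_right]
      ring
    have h1 : inner ℝ w (T (w - v)) ≤ (R + h) * (K * h) := by
      refine (real_inner_le_norm _ _).trans ?_
      have : ‖T (w - v)‖ ≤ K * h := (T.le_opNorm _).trans (by gcongr)
      gcongr
    have h2 : inner ℝ (w - v) (T v) ≤ h * (K * R) := by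
      refine (real_inner_le_norm _ _).trans ?_
      have : ‖T v‖ ≤ K * R := (T.le_opNorm _).trans (by gcongr)
      gcongr
    rw [hQ, hQ, e]
    linarith
  have hva : ‖ρ⁻¹ • a‖ ≤ R := by
    rw [norm_smul, norm_inv, Real.norm_of_nonneg hρ.le, inv_mul_le_iff₀ hρ]
    exact ha
  have hvb : ‖ρ⁻¹ • b - ρ⁻¹ • a‖ ≤ h := by
    rw [← smul_sub, norm_smul, norm_inv, Real.norm_of_nonneg hρ.le, inv_mul_le_iff₀ hρ]
    exact hab
  have hk := mul_le_mul_of_nonneg_left (key _ _ hva hvb) Real.pi_pos.le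
  unfold gaussScaled gauss
  rw [mul_left_comm (Real.exp ε), mul_left_comm (Real.exp ε), ← Real.exp_add]
  have : 0 ≤ ρ ^ (-(k : ℝ)) := Real.rpow_nonneg hρ.le _
  gcongr
  linarith

lemma log_one_div_rpow {δ : ℝ} (hδ : 0 < δ) (α : ℝ) :
    Real.log (1 / δ ^ α) = α * Real.log (1 / δ) := by
  rw [one_div, one_div, Real.log_inv, Real.log_inv, Real.log_rpow hδ]
  ring

lemma tendsto_rpow_mul_log_inv {c : ℝ} (hc : 0 < c) :
    Filter.Tendsto (fun δ : ℝ => δ ^ c * Real.log (1 / δ)) (nhdsWithin 0 (Set.Ioi 0)) (nhds 0) := by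
  have := (tendsto_log_mul_rpow_nhdsGT_zero hc).neg
  simp only [neg_zero] at this
  refine this.congr fun δ => ?_
  rw [one_div, Real.log_inv]
  ring

/-- The smallness conditions on `δ`: the balls involved stay in the ball of radius `r`, the Taylor
error is at most `δ ^ α`, and the change of the exponent is at most `δ ^ β`. -/
lemma eventually_thresholds {α β β' : ℝ} (hα : 1 < α) (hβ' : 0 < β') (hββ' : β < β') (hα2 : α < 2)
    (K : ℝ) {r : ℝ} (hr : 0 < r) :
    ∀ᶠ δ in nhdsWithin (0 : ℝ) (Set.Ioi 0),
      δ * Real.log (1 / δ) < r / 3 ∧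
      2 * (δ * Real.log (1 / δ)) < r / 3 ∧
      2 * (δ ^ α * Real.log (1 / δ ^ α)) < r / 3 ∧
      (2 * (δ * Real.log (1 / δ))) ^ 2 ≤ δ ^ α ∧
      π * (K * δ ^ β' * (2 * (K * (1 + 2 * (α * Real.log (1 / δ)))) + δ ^ β')) ≤ δ ^ β := by
  have t1 := tendsto_rpow_mul_log_inv one_pos
  simp only [Real.rpow_one] at t1
  have tα := (tendsto_rpow_mul_log_inv (c := α) (by linarith)).const_mul (2 * α)
  have ts := (((tendsto_rpow_mul_log_inv (c := 1 - α / 2) (by linarith)).const_mul 2).pow 2)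
  have tp : ∀ c : ℝ, 0 < c → Filter.Tendsto (fun δ : ℝ => δ ^ c) (nhdsWithin 0 (Set.Ioi 0))
      (nhds 0) := by
    intro c hc
    have := (Real.continuousAt_rpow_const 0 c (Or.inr hc.le)).tendsto
    rw [Real.zero_rpow hc.ne'] at this
    exact this.mono_left nhdsWithin_le_nhds
  have tβ := ((((tp (β' - β) (by linarith)).const_mul (2 * K)).add
    ((tendsto_rpow_mul_log_inv (c := β' - β) (by linarith)).const_mul (4 * K * α))).add
    ((tp (β' - β) (by linarith)).mul (tp β' hβ'))).const_mul (π * K)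
  simp only [mul_zero, add_zero] at tβ tα ts
  rw [zero_pow two_ne_zero] at ts
  filter_upwards [t1.eventually_lt_const (show (0 : ℝ) < r / 6 by positivity),
    tα.eventually_lt_const (show (0 : ℝ) < r / 3 by positivity),
    ts.eventually_lt_const one_pos, tβ.eventually_lt_const one_pos, self_mem_nhdsWithin] with δ h1 h2 h3 h4 hδ
  have hδ : 0 < δ := hδ
  refine ⟨by linarith, by linarith, ?_, ?_, ?_⟩
  · rw [log_one_div_rpow hδ]
    linarith
  · have e : (2 * (δ * Real.log (1 / δ))) ^ 2
        = δ ^ α * (2 * (δ ^ (1 - α / 2) * Real.log (1 / δ))) ^ 2 := by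
      have : δ ^ α * (δ ^ (1 - α / 2)) ^ 2 = δ ^ 2 := by
        rw [← Real.rpow_natCast (δ ^ (1 - α / 2)), ← Real.rpow_mul hδ.le, ← Real.rpow_add hδ,
          ← Real.rpow_natCast δ]
        congr 1
        push_cast
        ring
      linear_combination -(4 * Real.log (1 / δ) ^ 2) * this
    rw [e]
    exact mul_le_of_le_one_right (Real.rpow_nonneg hδ.le _) h3.le
  · have hf : δ ^ β' = δ ^ β * δ ^ (β' - β) := by
      rw [← Real.rpow_add hδ]
      congr 1
      ring
    calc π * (K * δ ^ β' * (2 * (K * (1 + 2 * (α * Real.log (1 / δ)))) + δ ^ β'))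
        = δ ^ β * (π * K * (2 * K * δ ^ (β' - β) +
            4 * K * α * (δ ^ (β' - β) * Real.log (1 / δ)) + δ ^ (β' - β) * δ ^ β')) := by
          linear_combination
            (π * K * (2 * (K * (1 + 2 * (α * Real.log (1 / δ)))) + δ ^ β')) * hf
      _ ≤ δ ^ β := mul_le_of_le_one_right (Real.rpow_nonneg hδ.le _) h4.le

/-- local constancy of the (scaled, recentred) gaussian extremisers on the
relevant truncated neighbourhoods. -/
theorem gaussian_local_constancy {m n : ℕ} (nn : Fin m → ℕ)
    (B : ∀ j, Euc n → Euc (nn j)) (p : Fin m → ℝ)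
    (hp : ∀ j, p j ∈ Set.Ioo (0:ℝ) 1)
    (V : Set (Euc n)) (hV : IsOpen V) (h0V : (0 : Euc n) ∈ V)
    (hB : ∀ j, ContDiffOn ℝ 2 (B j) V)
    (hsub : ∀ j, ∀ x ∈ V, Function.Surjective (fderiv ℝ (B j) x))
    (hsimple : BLsimple nn (fun j => fderiv ℝ (B j) 0) p)
    (α β β' : ℝ) (hα : 1 < α) (hβ : 0 < β) (hββ' : β < β') (hβ'α : β' < 2 - α)
    (W : Set (Euc n)) (hW : W ∈ nhds (0 : Euc n))
    (A : Euc n → ∀ j, Matrix (Fin (nn j)) (Fin (nn j)) ℝ)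
    (hApos : ∀ u ∈ W, ∀ j, (A u j).PosDef)
    (hAcont : ContinuousOn A W)
    (hext : ∀ u ∈ W,
      BLfun nn (fun j => fderiv ℝ (B j) u) p (fun j => gauss (A u j)) =
        BLsup nn (fun j => fderiv ℝ (B j) u) p) :
    ∃ ν > 0, Udelta ν (0 : Euc n) ⊆ W ∧
      ∀ δ ∈ Set.Ioo (0:ℝ) ν, ∀ μ : ℝ, 0 < μ → μ < δ ^ (α + β') →
      ∀ u ∈ Udelta ν (0 : Euc n),
      ∀ x ∈ Metric.closedBall u (2 * (δ * Real.log (1/δ))), ∀ j,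
      KConstOn (Real.exp (δ ^ β)) μ
        (B j '' Metric.closedBall x (2 * (δ ^ α * Real.log (1 / δ ^ α))))
        (fun w => gaussScaled (A u j) (δ ^ α)
          (B j u + fderiv ℝ (B j) u (x - u) - w)) := by
  have hVn : V ∈ nhds (0 : Euc n) := hV.mem_nhds h0V
  have hA0 : ContinuousAt A 0 := hAcont.continuousAt hW
  have hloc := fun j => exists_local_bounds (B j) ((hB j).contDiffAt hVn) (fun u => A u j)
    (continuousAt_pi.1 hA0 j)
  choose K hK r hr hbd using hloc
  obtain ⟨rW, hrW, hballW⟩ := Metric.mem_nhds_iff.1 hW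
  have hthr := fun j => eventually_thresholds hα (hβ.trans hββ') hββ' (by linarith) (K j) (hr j)
  have hWthr := eventually_thresholds hα (hβ.trans hββ') hββ' (by linarith) 1 hrW
  obtain ⟨ν₀, hν₀, hsub₀⟩ := mem_nhdsGT_iff_exists_Ioo_subset.1
    ((Filter.eventually_all.2 hthr).and hWthr)
  have hν₀ : 0 < ν₀ := hν₀
  have hνmem : ν₀ / 2 ∈ Set.Ioo 0 ν₀ := ⟨by linarith, by linarith⟩
  refine ⟨ν₀ / 2, hνmem.1, ?_, ?_⟩
  · refine (Metric.closedBall_subset_ball ?_).trans hballW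
    linarith [(hsub₀ hνmem).2.1]
  · rintro δ ⟨hδ, hδν⟩ μ - hμδ u hu x hx j _ ⟨z, hz, rfl⟩ y hy
    obtain ⟨-, c1, c2, c3, c4⟩ :=
      (hsub₀ (show δ ∈ Set.Ioo 0 ν₀ from ⟨hδ, by linarith⟩)).1 j
    have cν := ((hsub₀ hνmem).1 j).1
    simp only [Udelta, Metric.mem_closedBall, dist_zero_right] at hu hx hz
    have hu' : u ∈ Metric.ball (0 : Euc n) (r j) := by
      rw [mem_ball_zero_iff]
      linarith [hr j]
    have hxn : ‖x‖ < r j / 3 + r j / 3 := by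
      have := dist_triangle x u 0
      simp only [dist_zero_right] at this
      linarith
    have hx' : x ∈ Metric.ball (0 : Euc n) (r j) := by
      rw [mem_ball_zero_iff]
      linarith [hr j]
    have hz' : z ∈ Metric.ball (0 : Euc n) (r j) := by
      have := dist_triangle z x 0
      simp only [dist_zero_right] at this
      rw [mem_ball_zero_iff]
      linarith
    obtain ⟨hT, -, hTay⟩ := hbd j u hu' x hx'
    have hLip := (hbd j z hz' x hx').2.1
    have hρ : 0 < δ ^ α := Real.rpow_pos_of_pos hδ α
    refine gaussScaled_le (A u j) (h := δ ^ β')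
      (R := K j * (1 + 2 * (α * Real.log (1 / δ)))) hρ hT _ _ ?_ ?_ c4
    · have hK := hK j
      have e1 : ‖B j x - B j u - fderiv ℝ (B j) u (x - u)‖ ≤ K j * δ ^ α := by
        refine hTay.trans ?_
        gcongr
        refine le_trans ?_ c3
        gcongr
        rwa [← dist_eq_norm]
      have e2 : ‖B j x - B j z‖ ≤ K j * (2 * (δ ^ α * (α * Real.log (1 / δ)))) := by
        refine hLip.trans ?_
        gcongr
        rwa [← dist_eq_norm, dist_comm, ← log_one_div_rpow hδ]
      calc ‖B j u + fderiv ℝ (B j) u (x - u) - B j z‖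
          = ‖(B j x - B j z) - (B j x - B j u - fderiv ℝ (B j) u (x - u))‖ := by
            congr 1
            abel
        _ ≤ _ := norm_sub_le _ _
        _ ≤ _ := add_le_add e2 e1
        _ = _ := by ring
    · rw [← Real.rpow_add hδ, ← dist_eq_norm, dist_sub_left, dist_comm]
      exact hy.trans hμδ.le
end
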